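/- arXiv:2112.13978 — 2 statements merged into one kernel-verified Lean document; each statement's English description precedes it below -/
import Mathlib

section
/- Let n ≥ 3, let Ω ⊂ ℝⁿ be an open bounded set and let Ω₁ ⊂ ℝⁿ be an open bounded set with closure(Ω) ⊂ Ω₁, and fix a constant c > 0. Then there exist constants M₀ > 0 and C̃ > 0 (depending on c, n, Ω, Ω₁) such that for every 0 < M ≤ M₀ and all continuously differentiable f₁, f₂ : ℝⁿ → ℝ supported in the closure of Ω with ‖f_j‖_{C¹(ℝⁿ)} ≤ M for j = 1,2 and satisfying ‖f₁ − f₂‖_{L²(ℝⁿ)} ≥ c ‖∇(f₁ − f₂)‖_{L²(ℝⁿ)}, one has the stability estimate C̃ ‖f₁ − f₂‖_{L²(ℝⁿ)} ≤ ‖Kf₁ − Kf₂‖_{H¹(Ω₁)}. -/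
open MeasureTheory Metric Real

/-- The `n`-dimensional Euclidean space. -/
abbrev Euc (n : ℕ) := EuclideanSpace ℝ (Fin n)

/-- The standard surface measure on the unit sphere `S^{n-1} ⊂ ℝⁿ`. -/
noncomputable def sphereMeasure (n : ℕ) : Measure (sphere (0 : Euc n) 1) :=
  (volume : Measure (Euc n)).toSphere

/-- The surface measure `|S^{n-1}|` of the unit sphere in `ℝⁿ`. -/
noncomputable def sphereVol (n : ℕ) : ℝ := (sphereMeasure n Set.univ).toReal

/-- The X-ray transform `Xf(x,θ) = ∫_ℝ f(x+sθ) ds`. -/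
noncomputable def Xray {n : ℕ} (f : Euc n → ℝ) (x θ : Euc n) : ℝ :=
  ∫ s : ℝ, f (x + s • θ)

/-- The normal operator `X'Xf(x) = ∫_{S^{n-1}} Xf(x,θ) dθ`. -/
noncomputable def normalOp {n : ℕ} (f : Euc n → ℝ) (x : Euc n) : ℝ :=
  ∫ θ : sphere (0 : Euc n) 1, Xray f x (θ : Euc n) ∂(sphereMeasure n)

/-- The single pixel X-ray transform `Kf(x) = ∫_{S^{n-1}} e^{-Xf(x,θ)} dθ`. -/
noncomputable def singlePixel {n : ℕ} (f : Euc n → ℝ) (x : Euc n) : ℝ :=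
  ∫ θ : sphere (0 : Euc n) 1, Real.exp (-(Xray f x (θ : Euc n))) ∂(sphereMeasure n)

/-- The Fourier transform `𝓕f(ξ) = ∫ e^{-i x·ξ} f(x) dx`. -/
noncomputable def FT {n : ℕ} (f : Euc n → ℝ) (ξ : Euc n) : ℂ :=
  ∫ x : Euc n, Complex.exp (-(Complex.I * ((inner ℝ x ξ : ℝ) : ℂ))) * (f x : ℂ)

/-- The inverse Fourier transform `𝓕⁻¹g(x) = (2π)^{-n} ∫ e^{i x·ξ} g(ξ) dξ`. -/
noncomputable def invFT {n : ℕ} (g : Euc n → ℂ) (x : Euc n) : ℂ :=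
  ((((2 * π) ^ n)⁻¹ : ℝ) : ℂ) * ∫ ξ : Euc n, Complex.exp (Complex.I * ((inner ℝ x ξ : ℝ) : ℂ)) * g ξ

/-- The `L²(ℝⁿ)` norm `(∫ |f|²)^{1/2}`. -/
noncomputable def L2norm {n : ℕ} (f : Euc n → ℝ) : ℝ :=
  (∫ x : Euc n, f x ^ 2) ^ ((1 : ℝ) / 2)

/-- The `H¹(U)` norm `(∫_U |u|²)^{1/2} + (∫_U |∇u|²)^{1/2}`. -/
noncomputable def H1norm {n : ℕ} (U : Set (Euc n)) (u : Euc n → ℝ) : ℝ :=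
  (∫ x in U, u x ^ 2) ^ ((1 : ℝ) / 2) + (∫ x in U, ‖fderiv ℝ u x‖ ^ 2) ^ ((1 : ℝ) / 2)

theorem sq_integral_le {α : Type*} [MeasurableSpace α] {μ : Measure α} [IsFiniteMeasure μ]
    {g : α → ℝ} (hg : Integrable g μ) (hg2 : Integrable (fun a => g a ^ 2) μ) :
    (∫ a, g a ∂μ) ^ 2 ≤ μ.real Set.univ * ∫ a, g a ^ 2 ∂μ := by
  set m := μ.real Set.univ
  set I := ∫ a, g a ∂μ with hI
  have hm : 0 ≤ m := measureReal_nonneg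
  have key : ∫ a, (m * g a - I) ^ 2 ∂μ = m * (m * ∫ a, g a ^ 2 ∂μ - I ^ 2) := by
    have : ∀ a, (m * g a - I) ^ 2 = (m ^ 2 * g a ^ 2 - 2 * m * I * g a) + I ^ 2 := fun a => by ring
    simp_rw [this]
    rw [integral_add (f := fun a => m ^ 2 * g a ^ 2 - 2 * m * I * g a)
        ((hg2.const_mul _).sub (hg.const_mul _)) (integrable_const _),
      integral_sub (hg2.const_mul _) (hg.const_mul _), integral_const_mul, integral_const_mul,
      integral_const, ← hI]
    simp only [smul_eq_mul]
    ring
  have hpos : 0 ≤ m * (m * ∫ a, g a ^ 2 ∂μ - I ^ 2) :=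
    key ▸ integral_nonneg fun a => sq_nonneg _
  rcases hm.eq_or_lt with h0 | h0
  · have : μ = 0 := by
      rw [← Measure.measure_univ_eq_zero]
      exact (measureReal_eq_zero_iff).1 h0.symm
    simp [hI, this]
  · nlinarith [(mul_nonneg_iff_of_pos_left h0).1 hpos]

section Polar

variable {E : Type*} [NormedAddCommGroup E] [NormedSpace ℝ E] [FiniteDimensional ℝ E]
  [MeasurableSpace E] [BorelSpace E] [Nontrivial E]

/-- Integration in polar coordinates. -/
theorem integral_eq_integral_toSphere (μ : Measure E) [μ.IsAddHaarMeasure] {g : E → ℝ}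
    (hg : Integrable g μ) :
    ∫ y, g y ∂μ = ∫ θ : sphere (0 : E) 1, (∫ r in Set.Ioi (0 : ℝ),
      r ^ (Module.finrank ℝ E - 1) * g (r • (θ : E))) ∂μ.toSphere := by
  have hemb := Homeomorph.measurableEmbedding (homeomorphUnitSphereProd E)
  have hmp := μ.measurePreserving_homeomorphUnitSphereProd
  have hcomp : ∀ y : ({0}ᶜ : Set E),
      g ((homeomorphUnitSphereProd E y).2.1 • ((homeomorphUnitSphereProd E y).1 : E)) = g y := by
    intro y
    have hy : ‖(y : E)‖ ≠ 0 := norm_ne_zero_iff.2 y.2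
    simp [smul_smul, hy]
  have hint : Integrable (fun p : sphere (0 : E) 1 × Set.Ioi (0 : ℝ) => g (p.2.1 • (p.1 : E)))
      (μ.toSphere.prod (.volumeIoiPow (Module.finrank ℝ E - 1))) := by
    rw [← hmp.integrable_comp_emb hemb]
    simp only [Function.comp_def, hcomp]
    have := hg.integrableOn (s := ({0}ᶜ : Set E))
    rwa [integrableOn_iff_comap_subtypeVal (measurableSet_singleton _).compl] at this
  calc
    ∫ y, g y ∂μ = ∫ y : ({0}ᶜ : Set E), g y ∂(μ.comap (↑)) := by
      rw [integral_subtype_comap (measurableSet_singleton _).compl g,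
        restrict_compl_singleton]
    _ = ∫ p, g (p.2.1 • (p.1 : E)) ∂μ.toSphere.prod (.volumeIoiPow (Module.finrank ℝ E - 1)) := by
      rw [← hmp.integral_comp hemb]
      simp only [hcomp]
    _ = _ := by
      rw [integral_prod _ hint]
      refine integral_congr_ae (.of_forall fun θ => ?_)
      simp only [Measure.volumeIoiPow, ENNReal.ofReal]
      rw [integral_withDensity_eq_integral_smul,
        integral_subtype_comap measurableSet_Ioi
          fun a : ℝ ↦ Real.toNNReal (a ^ (Module.finrank ℝ E - 1)) • g (a • (θ : E)),
        setIntegral_congr_fun measurableSet_Ioi fun x hx ↦ ?_]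
      · rw [NNReal.smul_def, Real.coe_toNNReal _ (pow_nonneg hx.out.le _), smul_eq_mul]
      · exact (measurable_subtype_coe.pow_const _).real_toNNReal

end Polar

theorem integrableOn_inv_norm_pow (n : ℕ) (hn : 3 ≤ n) (R : ℝ) :
    IntegrableOn (fun y : Euc n => (‖y‖ ^ (n - 1))⁻¹) (ball 0 R) := by
  have : Nontrivial (Euc n) := by
    apply Module.nontrivial_of_finrank_pos (R := ℝ); simp; omega
  rw [integrableOn_fun_norm_addHaar (μ := (volume : Measure (Euc n)))
    (f := fun t => (t ^ (n - 1))⁻¹), finrank_euclideanSpace_fin]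
  have : IntegrableOn (fun _ : ℝ => (1 : ℝ)) (Set.Ioo 0 R) := by simp
  refine this.congr_fun (fun y hy => ?_) measurableSet_Ioo
  have := hy.1
  simp only [smul_eq_mul]
  field_simp

section ConeKernel

variable {n : ℕ}

/-- The function `(z, r) ↦ r ^ (-2n)` restricted to the balls `B(z, r)` that contain `0` and `w`. -/
noncomputable def coneKernel (w : Euc n) (p : Euc n × ℝ) : ℝ :=
  if ‖p.1‖ < p.2 ∧ ‖p.1 - w‖ < p.2 then (p.2 ^ (2 * n))⁻¹ else 0

theorem coneKernel_nonneg (w : Euc n) (p : Euc n × ℝ) : 0 ≤ coneKernel w p := by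
  unfold coneKernel
  split_ifs <;> simp [pow_mul, sq_nonneg]

instance : (volume : Measure (Euc n × ℝ)).IsAddHaarMeasure :=
  inferInstanceAs ((volume : Measure (Euc n)).prod (volume : Measure ℝ)).IsAddHaarMeasure

theorem Measurable.coneKernel {α : Type*} [MeasurableSpace α] {f : α → Euc n}
    {g : α → Euc n × ℝ} (hf : Measurable f) (hg : Measurable g) :
    Measurable fun a => coneKernel (f a) (g a) := by
  unfold _root_.coneKernel
  refine Measurable.ite ?_ (hg.snd.pow_const _).inv measurable_const
  exact (measurableSet_lt hg.fst.norm hg.snd).inter (measurableSet_lt (hg.fst.sub hf).norm hg.snd)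

theorem coneKernel_smul (w : Euc n) (p : Euc n × ℝ) {t : ℝ} (ht : 0 < t) :
    coneKernel (t • w) (t • p) = (t ^ (2 * n))⁻¹ * coneKernel w p := by
  unfold coneKernel
  simp [← smul_sub, norm_smul, abs_of_pos ht, ht, mul_pow, mul_comm]

theorem coneKernel_map (U : Euc n ≃ₗᵢ[ℝ] Euc n) (w : Euc n) (p : Euc n × ℝ) :
    coneKernel (U w) (U p.1, p.2) = coneKernel w p := by
  unfold coneKernel
  simp [← map_sub]

theorem integrable_coneKernel (hn : 3 ≤ n) {w : Euc n} (hw : w ≠ 0) :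
    Integrable (coneKernel w) := by
  have hw' : 0 < ‖w‖ := norm_pos_iff.2 hw
  have hdim : (Module.finrank ℝ (Euc n × ℝ) : ℝ) < (2 * n : ℕ) := by
    simp only [Module.finrank_prod, finrank_euclideanSpace_fin, Module.finrank_self]
    exact_mod_cast (by omega)
  refine ((integrable_one_add_norm (μ := (volume : Measure (Euc n × ℝ))) hdim).const_mul
    ((2 / ‖w‖ + 1) ^ (2 * n))).mono'
    (measurable_const.coneKernel measurable_id).aestronglyMeasurable (.of_forall fun p => ?_)
  rw [Real.norm_of_nonneg (coneKernel_nonneg w p)]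
  rw [Real.rpow_neg (by positivity), Real.rpow_natCast]
  unfold coneKernel
  split_ifs with h
  · have hp : 0 < p.2 := (norm_nonneg _).trans_lt h.1
    have hpn : ‖p‖ = p.2 := by
      rw [Prod.norm_def, Real.norm_of_nonneg hp.le, max_eq_right h.1.le]
    have hlt : ‖w‖ ≤ 2 * p.2 := by
      have := norm_sub_le p.1 (p.1 - w)
      rw [sub_sub_cancel] at this
      linarith [h.1, h.2]
    rw [hpn, ← div_eq_mul_inv, le_div_iff₀ (by positivity), inv_mul_le_iff₀ (by positivity),
      ← mul_pow]
    gcongr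
    have : 1 ≤ p.2 * (2 / ‖w‖) := by
      rw [mul_div_assoc', le_div_iff₀ hw']
      linarith
    linarith
  · positivity

theorem integral_coneKernel (hn : 3 ≤ n) : ∃ κ : ℝ, 0 ≤ κ ∧ ∀ w : Euc n, w ≠ 0 →
    ∫ p, coneKernel w p = κ * (‖w‖ ^ (n - 1))⁻¹ := by
  have : Nontrivial (Euc n) := by
    apply Module.nontrivial_of_finrank_pos (R := ℝ)
    rw [finrank_euclideanSpace_fin]
    omega
  obtain ⟨e, he⟩ := exists_norm_eq (Euc n) zero_le_one
  refine ⟨∫ p, coneKernel e p, integral_nonneg (coneKernel_nonneg e), fun w hw => ?_⟩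
  have hw' : 0 < ‖w‖ := norm_pos_iff.2 hw
  set v : Euc n := ‖w‖⁻¹ • w with hv
  have hvn : ‖v‖ = 1 := by simp [hv, norm_smul, hw'.ne']
  have hwv : w = ‖w‖ • v := by simp [hv, smul_smul, hw'.ne']
  have hrot : ∫ p, coneKernel v p = ∫ p, coneKernel e p := by
    set U : Euc n ≃ₗᵢ[ℝ] Euc n := (ℝ ∙ (e - v))ᗮ.reflection
    have hU : U e = v := Submodule.reflection_sub (by rw [he, hvn])
    have hmp : MeasurePreserving (Prod.map U (id : ℝ → ℝ))
        (volume : Measure (Euc n × ℝ)) volume :=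
      U.measurePreserving.prod (MeasurePreserving.id volume)
    have hemb : MeasurableEmbedding (Prod.map U (id : ℝ → ℝ)) :=
      (U.toHomeomorph.prodCongr (Homeomorph.refl ℝ)).measurableEmbedding
    rw [← hmp.integral_comp hemb]
    simp only [← hU]
    exact integral_congr_ae (.of_forall fun p => coneKernel_map U e p)
  have hscale := Measure.integral_comp_smul (volume : Measure (Euc n × ℝ))
    (fun p => coneKernel w p) ‖w‖
  conv_lhs at hscale =>
    enter [2, p]
    rw [hwv, norm_smul, hvn, mul_one, norm_norm, coneKernel_smul _ _ hw']
  rw [integral_const_mul, hrot, Module.finrank_prod, finrank_euclideanSpace_fin,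
    Module.finrank_self, smul_eq_mul, abs_of_pos (by positivity)] at hscale
  have h2 : 2 * n = (n + 1) + (n - 1) := by omega
  rw [h2, pow_add] at hscale
  field_simp at hscale ⊢
  linarith

end ConeKernel

theorem integrable_sq {E : Type*} [NormedAddCommGroup E] [MeasurableSpace E] [BorelSpace E]
    {μ : Measure E} [IsFiniteMeasureOnCompacts μ] {h : E → ℝ} (hh : Continuous h)
    (hs : HasCompactSupport h) :
    Integrable (fun z => h z ^ 2) μ := by
  have hs2 : HasCompactSupport fun z => h z ^ 2 := hs.comp_left (g := fun t : ℝ => t ^ 2) (by simp)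
  exact (by fun_prop : Continuous fun z => h z ^ 2).integrable_of_hasCompactSupport hs2

section Translation

variable {E : Type*} [NormedAddCommGroup E] [NormedSpace ℝ E] [FiniteDimensional ℝ E]
  [MeasurableSpace E] [BorelSpace E] {μ : Measure E} [μ.IsAddHaarMeasure]
  {β : Type*} [MeasurableSpace β] {ν : Measure β} [IsFiniteMeasure ν]
  {g h : E → ℝ} {φ : β → E}

theorem integrable_prod_comp_add (hg : Continuous g) (hgi : Integrable g μ) (hφ : Measurable φ) :
    Integrable (fun p : E × β => g (p.1 + φ p.2)) (μ.prod ν) := by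
  have hm : Measurable fun p : E × β => g (p.1 + φ p.2) := hg.measurable.comp (by fun_prop)
  rw [integrable_prod_iff' hm.aestronglyMeasurable]
  refine ⟨.of_forall fun b => hgi.comp_add_right (φ b), ?_⟩
  simp only [integral_add_right_eq_self (fun z => ‖g z‖)]
  exact integrable_const _

theorem integral_integral_comp_add (hg : Continuous g) (hgi : Integrable g μ)
    (hφ : Measurable φ) :
    ∫ z, ∫ b, g (z + φ b) ∂ν ∂μ = ν.real Set.univ * ∫ z, g z ∂μ := by
  rw [integral_integral_swap (integrable_prod_comp_add hg hgi hφ)]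
  simp [integral_add_right_eq_self g]

theorem integral_sq_sub_le (hh : ContDiff ℝ 1 h) (hs : HasCompactSupport h) (y : E) :
    ∫ z, (h (z + y) - h z) ^ 2 ∂μ ≤ ‖y‖ ^ 2 * ∫ z, ‖fderiv ℝ h z‖ ^ 2 ∂μ := by
  have hd : Continuous (fderiv ℝ h) := hh.continuous_fderiv one_ne_zero
  have hdc : Continuous fun z => ‖fderiv ℝ h z‖ ^ 2 := by fun_prop
  have hdi : Integrable (fun z => ‖fderiv ℝ h z‖ ^ 2) μ := by
    refine hdc.integrable_of_hasCompactSupport ?_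
    exact (hs.fderiv ℝ).comp_left (g := fun T => ‖T‖ ^ 2) (by simp)
  have hφ : Measurable fun t : ℝ => t • y := by fun_prop
  have hint := integrable_prod_comp_add (ν := volume.restrict (Set.Ioc (0 : ℝ) 1)) hdc hdi hφ
  have htot := integral_integral_comp_add (ν := volume.restrict (Set.Ioc (0 : ℝ) 1)) hdc hdi hφ
  have hpt : ∀ z, (h (z + y) - h z) ^ 2 ≤
      ‖y‖ ^ 2 * ∫ t in Set.Ioc (0 : ℝ) 1, ‖fderiv ℝ h (z + t • y)‖ ^ 2 := by
    intro z
    have hc : Continuous fun t : ℝ => fderiv ℝ h (z + t • y) y := by fun_prop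
    have hderiv : ∀ t : ℝ,
        HasDerivAt (fun t : ℝ => h (z + t • y)) (fderiv ℝ h (z + t • y) y) t := by
      intro t
      have h1 : HasDerivAt (fun t : ℝ => z + t • y) y t := by
        simpa using ((hasDerivAt_id t).smul_const y).const_add z
      exact ((hh.differentiable one_ne_zero) _).hasFDerivAt.comp_hasDerivAt t h1
    have hftc := intervalIntegral.integral_eq_sub_of_hasDerivAt (a := 0) (b := 1)
      (fun t _ => hderiv t) (hc.intervalIntegrable 0 1)
    rw [intervalIntegral.integral_of_le zero_le_one] at hftc
    simp only [one_smul, zero_smul, add_zero] at hftc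
    rw [← hftc]
    have hc2 : Continuous fun t : ℝ => (fderiv ℝ h (z + t • y) y) ^ 2 := by fun_prop
    refine (sq_integral_le (μ := volume.restrict (Set.Ioc (0 : ℝ) 1)) hc.integrableOn_Ioc
      hc2.integrableOn_Ioc).trans ?_
    rw [← integral_const_mul (‖y‖ ^ 2)]
    simp only [measureReal_restrict_apply_univ, Real.volume_real_Ioc, sub_zero, zero_le_one,
      sup_of_le_left, one_mul]
    refine integral_mono (μ := volume.restrict (Set.Ioc (0 : ℝ) 1)) hc2.integrableOn_Ioc
      (by fun_prop : Continuous fun t : ℝ =>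
      ‖y‖ ^ 2 * ‖fderiv ℝ h (z + t • y)‖ ^ 2).integrableOn_Ioc fun t => ?_
    simp only
    rw [← sq_abs, ← mul_pow, mul_comm]
    gcongr
    exact (fderiv ℝ h (z + t • y)).le_opNorm y
  refine (integral_mono_of_nonneg (.of_forall fun z => sq_nonneg _)
    (hint.integral_prod_left.const_mul (‖y‖ ^ 2)) (.of_forall hpt)).trans ?_
  rw [integral_const_mul, htot]
  simp

/-- A Poincaré-type inequality comparing a function with its averages over balls of radius `r`. -/
theorem sq_measureReal_ball_mul_integral_sq_le (hh : ContDiff ℝ 1 h) (hs : HasCompactSupport h)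
    (r : ℝ) :
    μ.real (ball 0 r) ^ 2 * ∫ z, h z ^ 2 ∂μ ≤
      2 * ∫ z, (∫ y in ball 0 r, h (z + y) ∂μ) ^ 2 ∂μ +
        2 * μ.real (ball 0 r) ^ 2 * r ^ 2 * ∫ z, ‖fderiv ℝ h z‖ ^ 2 ∂μ := by
  set V := μ.real (ball 0 r) with hV
  set D := ∫ z, ‖fderiv ℝ h z‖ ^ 2 ∂μ with hD
  have hc := hh.continuous
  have : IsFiniteMeasure (μ.restrict (ball (0 : E) r)) :=
    isFiniteMeasure_restrict.2 measure_ball_lt_top.ne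
  have hVu : (μ.restrict (ball (0 : E) r)).real Set.univ = V := by simp [hV]
  have h2 : Integrable (fun z => h z ^ 2) μ := integrable_sq hc hs
  have hball : ∀ {F : E → ℝ}, Continuous F → Integrable F (μ.restrict (ball 0 r)) := by
    intro F hF
    exact (hF.continuousOn.integrableOn_compact (isCompact_closedBall 0 r)).mono_set
      ball_subset_closedBall
  have hprod : Integrable (fun p : E × E => h (p.1 + p.2) ^ 2) (μ.prod (μ.restrict (ball 0 r))) :=
    integrable_prod_comp_add (hc.pow 2) h2 measurable_id
  have hprod' : Integrable (fun p : E × E => (h (p.1 + p.2) - h p.1) ^ 2)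
      (μ.prod (μ.restrict (ball 0 r))) := by
    refine ((hprod.add (h2.comp_fst _)).const_mul 2).mono'
      (by fun_prop : Continuous fun p : E × E => (h (p.1 + p.2) - h p.1) ^ 2
        ).aestronglyMeasurable (.of_forall fun p => ?_)
    rw [Real.norm_of_nonneg (sq_nonneg _)]
    simp only [Pi.add_apply]
    nlinarith [sq_nonneg (h (p.1 + p.2) + h p.1)]
  have hAm : AEStronglyMeasurable (fun z => (∫ y in ball 0 r, h (z + y) ∂μ) ^ 2) μ := by
    have : StronglyMeasurable fun p : E × E => h (p.1 + p.2) :=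
      (by fun_prop : Continuous fun p : E × E => h (p.1 + p.2)).stronglyMeasurable
    exact (this.integral_prod_right.pow 2).aestronglyMeasurable
  have hA : Integrable (fun z => (∫ y in ball 0 r, h (z + y) ∂μ) ^ 2) μ := by
    refine (hprod.integral_prod_left.const_mul V).mono' hAm (.of_forall fun z => ?_)
    rw [Real.norm_of_nonneg (sq_nonneg _)]
    refine (sq_integral_le (hball (by fun_prop)) (hball (by fun_prop))).trans_eq ?_
    rw [hVu]
  have hpt : ∀ z, V ^ 2 * h z ^ 2 ≤ 2 * (∫ y in ball 0 r, h (z + y) ∂μ) ^ 2 +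
      2 * V * ∫ y in ball 0 r, (h (z + y) - h z) ^ 2 ∂μ := by
    intro z
    have hsq := sq_integral_le (μ := μ.restrict (ball 0 r)) (g := fun y => h (z + y) - h z)
      (hball (by fun_prop)) (hball (by fun_prop))
    rw [integral_sub (hball (by fun_prop)) (hball (by fun_prop)), integral_const, hVu,
      smul_eq_mul] at hsq
    set A := ∫ y in ball 0 r, h (z + y) ∂μ
    nlinarith [sq_nonneg (2 * A - V * h z)]
  have hswap : ∫ z, ∫ y in ball 0 r, (h (z + y) - h z) ^ 2 ∂μ ∂μ ≤ V * (r ^ 2 * D) := by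
    rw [integral_integral_swap hprod']
    have hle : ∫ y in ball 0 r, ∫ z, (h (z + y) - h z) ^ 2 ∂μ ∂μ ≤
        ∫ y in ball (0 : E) r, r ^ 2 * D ∂μ := by
      refine setIntegral_mono_on hprod'.integral_prod_right (integrable_const _)
        measurableSet_ball fun y hy => ?_
      refine (integral_sq_sub_le hh hs y).trans ?_
      have hD0 : 0 ≤ D := integral_nonneg fun z => sq_nonneg _
      have : ‖y‖ ≤ r := (mem_ball_zero_iff.1 hy).le
      gcongr
    simpa [hV] using hle
  calc V ^ 2 * ∫ z, h z ^ 2 ∂μ = ∫ z, V ^ 2 * h z ^ 2 ∂μ := (integral_const_mul _ _).symm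
    _ ≤ ∫ z, (2 * (∫ y in ball 0 r, h (z + y) ∂μ) ^ 2 +
        2 * V * ∫ y in ball 0 r, (h (z + y) - h z) ^ 2 ∂μ) ∂μ :=
      integral_mono (h2.const_mul _)
        ((hA.const_mul 2).add (hprod'.integral_prod_left.const_mul (2 * V))) hpt
    _ = 2 * ∫ z, (∫ y in ball 0 r, h (z + y) ∂μ) ^ 2 ∂μ +
        2 * V * ∫ z, ∫ y in ball 0 r, (h (z + y) - h z) ^ 2 ∂μ ∂μ := by
      rw [integral_add (hA.const_mul 2) (hprod'.integral_prod_left.const_mul (2 * V)),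
        integral_const_mul, integral_const_mul]
    _ ≤ _ := by
      have hV0 : 0 ≤ V := measureReal_nonneg
      nlinarith [mul_le_mul_of_nonneg_left hswap hV0]

end Translation

section NormalOperator

variable {n : ℕ} {h : Euc n → ℝ}

theorem integrable_mul_inv_norm_pow (hn : 3 ≤ n) (hh : Continuous h) (hs : HasCompactSupport h) :
    Integrable fun y : Euc n => h y * (‖y‖ ^ (n - 1))⁻¹ := by
  obtain ⟨R, hR⟩ := hs.isCompact.isBounded.subset_ball (0 : Euc n)
  obtain ⟨B, hB⟩ := hs.exists_bound_of_continuous hh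
  have hK : Integrable ((ball (0 : Euc n) R).indicator fun y => B * (‖y‖ ^ (n - 1))⁻¹) :=
    IntegrableOn.integrable_indicator ((integrableOn_inv_norm_pow n hn R).const_mul B)
      measurableSet_ball
  refine hK.mono' (by fun_prop) (.of_forall fun y => ?_)
  by_cases hy : y ∈ ball (0 : Euc n) R
  · rw [Set.indicator_of_mem hy, norm_mul,
      Real.norm_of_nonneg (by positivity : 0 ≤ (‖y‖ ^ (n - 1))⁻¹)]
    gcongr
    exact hB y
  · rw [Set.indicator_of_notMem hy,
      image_eq_zero_of_notMem_tsupport fun hy' => hy (hR hy')]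
    simp

theorem integrable_comp_line (hh : Continuous h) (hs : HasCompactSupport h) (x : Euc n)
    {θ : Euc n} (hθ : ‖θ‖ = 1) : Integrable fun s : ℝ => h (x + s • θ) := by
  have hiso : Isometry fun s : ℝ => x + s • θ :=
    Isometry.of_dist_eq fun s t => by simp [dist_eq_norm, ← sub_smul, norm_smul, hθ]
  have hcs : HasCompactSupport fun s : ℝ => h (x + s • θ) :=
    hs.comp_isClosedEmbedding hiso.isClosedEmbedding
  exact (by fun_prop : Continuous fun s : ℝ => h (x + s • θ)).integrable_of_hasCompactSupport hcs

theorem normalOp_eq (hn : 3 ≤ n) (hh : Continuous h) (hs : HasCompactSupport h) (x : Euc n) :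
    normalOp h x = 2 * ∫ y : Euc n, h (x + y) * (‖y‖ ^ (n - 1))⁻¹ := by
  have : Nontrivial (Euc n) := by
    apply Module.nontrivial_of_finrank_pos (R := ℝ)
    rw [finrank_euclideanSpace_fin]
    omega
  have hplus : Integrable fun y : Euc n => h (x + y) * (‖y‖ ^ (n - 1))⁻¹ :=
    integrable_mul_inv_norm_pow hn (h := fun y => h (x + y)) (by fun_prop)
      (hs.comp_homeomorph (Homeomorph.addLeft x))
  have hminus : Integrable fun y : Euc n => h (x - y) * (‖y‖ ^ (n - 1))⁻¹ :=
    integrable_mul_inv_norm_pow hn (h := fun y => h (x - y)) (by fun_prop)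
      (hs.comp_homeomorph (Homeomorph.subLeft x))
  have hneg : ∫ y : Euc n, h (x - y) * (‖y‖ ^ (n - 1))⁻¹ =
      ∫ y : Euc n, h (x + y) * (‖y‖ ^ (n - 1))⁻¹ := by
    rw [← integral_neg_eq_self]
    simp
  rw [two_mul]
  nth_rw 2 [← hneg]
  have hsum : Integrable fun y : Euc n =>
      h (x + y) * (‖y‖ ^ (n - 1))⁻¹ + h (x - y) * (‖y‖ ^ (n - 1))⁻¹ := hplus.add hminus
  rw [← integral_add hplus hminus, integral_eq_integral_toSphere _ hsum, normalOp, sphereMeasure]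
  refine integral_congr_ae (.of_forall fun θ => ?_)
  have hθ : ‖(θ : Euc n)‖ = 1 := norm_eq_of_mem_sphere θ
  have hint : Integrable fun s : ℝ => h (x + s • (θ : Euc n)) := integrable_comp_line hh hs x hθ
  simp only [Xray]
  rw [← integral_add_compl measurableSet_Ioi hint (s := Set.Ioi (0 : ℝ)), Set.compl_Ioi]
  have hrefl : ∫ s in Set.Iic (0 : ℝ), h (x + s • (θ : Euc n)) =
      ∫ s in Set.Ioi (0 : ℝ), h (x - s • (θ : Euc n)) := by
    have := integral_comp_neg_Ioi (0 : ℝ) fun s : ℝ => h (x + s • (θ : Euc n))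
    simpa [← sub_eq_add_neg] using this.symm
  rw [hrefl, ← integral_add hint.integrableOn]
  · refine setIntegral_congr_fun measurableSet_Ioi fun s hs => ?_
    have hs0 : (0 : ℝ) < s := hs
    simp only [finrank_euclideanSpace_fin, norm_smul, hθ, Real.norm_of_nonneg hs0.le]
    field_simp
  · have := hint.comp_neg
    simp only [neg_smul, ← sub_eq_add_neg] at this
    exact this.integrableOn

end NormalOperator

section Coercivity

variable {n : ℕ} {h : Euc n → ℝ}

theorem integrable_mul_mul_inv_norm_pow (hn : 3 ≤ n) (hh : Continuous h)
    (hs : HasCompactSupport h) :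
    Integrable fun q : Euc n × Euc n => h q.1 * h (q.1 + q.2) * (‖q.2‖ ^ (n - 1))⁻¹ := by
  obtain ⟨R, hR⟩ := hs.isCompact.isBounded.subset_ball (0 : Euc n)
  obtain ⟨B, hB⟩ := hs.exists_bound_of_continuous hh
  have hK : Integrable ((ball (0 : Euc n) (2 * R)).indicator fun y => B * (‖y‖ ^ (n - 1))⁻¹) :=
    IntegrableOn.integrable_indicator ((integrableOn_inv_norm_pow n hn (2 * R)).const_mul B)
      measurableSet_ball
  have hB0 : 0 ≤ B := (norm_nonneg _).trans (hB 0)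
  refine ((hh.integrable_of_hasCompactSupport hs).norm.mul_prod hK).mono'
    (by fun_prop) (.of_forall fun q => ?_)
  by_cases hq : q.2 ∈ ball (0 : Euc n) (2 * R)
  · rw [Set.indicator_of_mem hq, mul_assoc, norm_mul, norm_mul,
      Real.norm_of_nonneg (by positivity : 0 ≤ (‖q.2‖ ^ (n - 1))⁻¹)]
    gcongr
    exact hB _
  · suffices h q.1 * h (q.1 + q.2) = 0 by simp [this, hq]
    by_contra hne
    have h1 := hR (subset_tsupport h (left_ne_zero_of_mul hne))
    have h2 := hR (subset_tsupport h (right_ne_zero_of_mul hne))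
    rw [mem_ball_zero_iff] at h1 h2 hq
    have := norm_sub_le (q.1 + q.2) q.1
    rw [add_sub_cancel_left] at this
    linarith

/-- The quadratic form of the normal operator is an average of squared integrals over balls. -/
theorem integral_mul_normalOp_eq (hn : 3 ≤ n) (hh : Continuous h) (hs : HasCompactSupport h)
    {κ : ℝ} (hκ : ∀ w : Euc n, w ≠ 0 → ∫ p, coneKernel w p = κ * (‖w‖ ^ (n - 1))⁻¹) :
    Integrable (fun p : Euc n × ℝ => (p.2 ^ (2 * n))⁻¹ * (∫ y in ball 0 p.2, h (p.1 + y)) ^ 2) ∧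
    κ * ∫ x, h x * normalOp h x =
      2 * ∫ p : Euc n × ℝ, (p.2 ^ (2 * n))⁻¹ * (∫ y in ball 0 p.2, h (p.1 + y)) ^ 2 := by
  have : Nontrivial (Euc n) := by
    apply Module.nontrivial_of_finrank_pos (R := ℝ)
    rw [finrank_euclideanSpace_fin]
    omega
  set k : Euc n × Euc n → ℝ := fun q => h q.1 * h (q.1 + q.2) * (‖q.2‖ ^ (n - 1))⁻¹
  have hk : Integrable k := integrable_mul_mul_inv_norm_pow hn hh hs
  set F : Euc n × Euc n → Euc n × ℝ → ℝ := fun q p =>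
    h q.1 * h (q.1 + q.2) * coneKernel q.2 (p - (q.1, 0))
  have hFm : Measurable (Function.uncurry F) := by
    have m₁ : Measurable fun s : (Euc n × Euc n) × (Euc n × ℝ) => s.1.1 :=
      measurable_fst.comp measurable_fst
    have m₂ : Measurable fun s : (Euc n × Euc n) × (Euc n × ℝ) => s.1.2 :=
      measurable_snd.comp measurable_fst
    have m₃ : Measurable fun s : (Euc n × Euc n) × (Euc n × ℝ) => s.2 - (s.1.1, (0 : ℝ)) :=
      measurable_snd.sub (m₁.prodMk measurable_const)
    exact ((hh.measurable.comp m₁).mul (hh.measurable.comp (m₁.add m₂))).mul (m₂.coneKernel m₃)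
  have hne : ∀ᵐ q : Euc n × Euc n, q.2 ≠ 0 :=
    Measure.quasiMeasurePreserving_snd.ae (Measure.ae_ne volume 0)
  have hFint : ∀ q : Euc n × Euc n, q.2 ≠ 0 → ∫ p, F q p = κ * k q := by
    intro q hq
    simp only [F, k]
    rw [integral_const_mul, integral_sub_right_eq_self (coneKernel q.2), hκ _ hq]
    ring
  have hFnorm : ∀ q : Euc n × Euc n, q.2 ≠ 0 → ∫ p, ‖F q p‖ = κ * ‖k q‖ := by
    intro q hq
    simp only [F, k, norm_mul, Real.norm_of_nonneg (coneKernel_nonneg _ _)]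
    rw [integral_const_mul, integral_sub_right_eq_self (coneKernel q.2), hκ _ hq]
    simp only [norm_inv, norm_pow, norm_norm]
    ring
  have hF : Integrable (Function.uncurry F) (volume.prod volume) := by
    rw [integrable_prod_iff hFm.aestronglyMeasurable]
    refine ⟨?_, (hk.norm.const_mul κ).congr ?_⟩
    · filter_upwards [hne] with q hq
      exact ((integrable_coneKernel hn hq).comp_sub_right (q.1, (0 : ℝ))).const_mul
        (h q.1 * h (q.1 + q.2))
    · filter_upwards [hne] with q hq
      exact (hFnorm q hq).symm
  have hball : ∀ p : Euc n × ℝ, ∫ x, (ball p.1 p.2).indicator h x =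
      ∫ y in ball 0 p.2, h (p.1 + y) := by
    intro p
    rw [← integral_indicator measurableSet_ball,
      ← integral_add_left_eq_self _ p.1]
    congr with y
    simp [Set.indicator, dist_eq_norm]
  have hFball : ∀ q p, F q p = (p.2 ^ (2 * n))⁻¹ *
      ((ball p.1 p.2).indicator h q.1 * (ball p.1 p.2).indicator h (q.1 + q.2)) := by
    intro q p
    simp only [F, coneKernel, Set.indicator, mem_ball', dist_eq_norm, Prod.fst_sub, Prod.snd_sub,
      sub_zero, ← sub_sub]
    by_cases h₁ : ‖p.1 - q.1‖ < p.2 <;> by_cases h₂ : ‖p.1 - q.1 - q.2‖ < p.2 <;>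
      simp [h₁, h₂, mul_comm]
  have hinner : ∀ᵐ p : Euc n × ℝ, ∫ q, F q p =
      (p.2 ^ (2 * n))⁻¹ * (∫ y in ball 0 p.2, h (p.1 + y)) ^ 2 := by
    filter_upwards [hF.prod_left_ae] with p hp
    simp only [Function.uncurry, hFball] at hp ⊢
    rw [Measure.volume_eq_prod, integral_prod _ hp]
    simp only [integral_const_mul]
    simp only [integral_add_left_eq_self ((ball p.1 p.2).indicator h), integral_mul_const, hball]
    ring
  refine ⟨hF.integral_prod_right.congr hinner, ?_⟩
  rw [← integral_congr_ae hinner, ← integral_integral_swap hF]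
  rw [integral_congr_ae (hne.mono hFint), integral_const_mul, Measure.volume_eq_prod,
    integral_prod _ hk]
  simp only [k, mul_assoc, integral_const_mul, normalOp_eq hn hh hs]
  simp only [mul_left_comm _ (2 : ℝ), integral_const_mul]

theorem integral_sq_le_integral_mul_normalOp (hn : 3 ≤ n) (hh : ContDiff ℝ 1 h)
    (hs : HasCompactSupport h)
    {κ : ℝ} (hκ : ∀ w : Euc n, w ≠ 0 → ∫ p, coneKernel w p = κ * (‖w‖ ^ (n - 1))⁻¹)
    {c : ℝ} (hc : 0 < c) (hD : c ^ 2 * ∫ x, ‖fderiv ℝ h x‖ ^ 2 ≤ ∫ x, h x ^ 2) :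
    c / 4 * volume.real (ball (0 : Euc n) 1) ^ 2 * ∫ x, h x ^ 2 ≤
      κ * ∫ x, h x * normalOp h x := by
  obtain ⟨hint, heq⟩ := integral_mul_normalOp_eq hn hh.continuous hs hκ
  rw [heq, Measure.volume_eq_prod, integral_prod_symm _ hint]
  set V := volume.real (ball (0 : Euc n) 1)
  set H := ∫ x, h x ^ 2
  set D := ∫ x, ‖fderiv ℝ h x‖ ^ 2
  have hD0 : 0 ≤ D := integral_nonneg fun x => sq_nonneg _
  have hlow : ∫ r : ℝ, (Set.Ioo 0 (c / 2)).indicator (fun _ => V ^ 2 * H / 4) r ≤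
      ∫ r : ℝ, ∫ z : Euc n, (r ^ (2 * n))⁻¹ * (∫ y in ball 0 r, h (z + y)) ^ 2 := by
    refine integral_mono (IntegrableOn.integrable_indicator (by simp) measurableSet_Ioo)
      hint.integral_prod_right fun r => ?_
    refine Set.indicator_apply_le' (fun hr => ?_) fun _ => ?_
    · have hr0 : 0 < r := hr.1
      have hP := sq_measureReal_ball_mul_integral_sq_le (μ := volume) hh hs r
      rw [measureReal_def, Measure.addHaar_ball_of_pos _ _ hr0, finrank_euclideanSpace_fin,
        ENNReal.toReal_mul, ENNReal.toReal_ofReal (by positivity), ← measureReal_def] at hP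
      rw [integral_const_mul, inv_mul_eq_div, le_div_iff₀ (by positivity)]
      have hrD : r ^ 2 * D ≤ H / 4 := by
        have : r ^ 2 ≤ (c / 2) ^ 2 := by gcongr; exact hr.2.le
        nlinarith
      have := mul_le_mul_of_nonneg_left hrD (by positivity : 0 ≤ 2 * (r ^ n * V) ^ 2)
      rw [mul_comm 2 n, pow_mul]
      nlinarith
    · exact integral_nonneg fun z => mul_nonneg (by rw [pow_mul]; positivity) (sq_nonneg _)
  rw [integral_indicator measurableSet_Ioo] at hlow
  simp only [setIntegral_const, Real.volume_real_Ioo_of_le (half_pos hc).le, smul_eq_mul] at hlow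
  linarith

end Coercivity

section Remainder

variable {n : ℕ} {f f₁ f₂ : Euc n → ℝ}

instance : IsFiniteMeasure (sphereMeasure n) :=
  inferInstanceAs (IsFiniteMeasure (volume : Measure (Euc n)).toSphere)

theorem stronglyMeasurable_Xray (hf : Continuous f) :
    StronglyMeasurable fun q : Euc n × sphere (0 : Euc n) 1 => Xray f q.1 q.2 := by
  have : StronglyMeasurable fun q : (Euc n × sphere (0 : Euc n) 1) × ℝ =>
      f (q.1.1 + q.2 • (q.1.2 : Euc n)) :=
    (by fun_prop : Continuous _).stronglyMeasurable
  exact this.integral_prod_right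

theorem Xray_eq_setIntegral {R : ℝ} (hf : Function.support f ⊆ ball 0 R) {x θ : Euc n}
    (hx : x ∈ ball 0 R) (hθ : ‖θ‖ = 1) :
    Xray f x θ = ∫ s in Set.Icc (-(2 * R)) (2 * R), f (x + s • θ) := by
  refine (setIntegral_eq_integral_of_forall_compl_eq_zero fun s hs => ?_).symm
  by_contra hne
  have h1 := mem_ball_zero_iff.1 (hf hne)
  rw [mem_ball_zero_iff] at hx
  have := norm_sub_le (x + s • θ) x
  rw [add_sub_cancel_left, norm_smul, hθ, mul_one, Real.norm_eq_abs] at this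
  exact hs (abs_le.1 (by linarith))

theorem abs_Xray_le {R M : ℝ} (hR : 0 < R) (hf : Function.support f ⊆ ball 0 R)
    (hM : ∀ x, |f x| ≤ M) {x θ : Euc n} (hx : x ∈ ball 0 R) (hθ : ‖θ‖ = 1) :
    |Xray f x θ| ≤ 4 * R * M := by
  rw [Xray_eq_setIntegral hf hx hθ, ← Real.norm_eq_abs]
  refine (norm_setIntegral_le_of_norm_le_const measure_Icc_lt_top fun s _ => hM _).trans_eq ?_
  rw [Real.volume_real_Icc_of_le (by linarith)]
  ring

theorem Xray_sub (h₁ : Continuous f₁) (h₂ : Continuous f₂) (hs₁ : HasCompactSupport f₁)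
    (hs₂ : HasCompactSupport f₂) (x : Euc n) {θ : Euc n} (hθ : ‖θ‖ = 1) :
    Xray (fun y => f₁ y - f₂ y) x θ = Xray f₁ x θ - Xray f₂ x θ :=
  integral_sub (integrable_comp_line h₁ hs₁ x hθ) (integrable_comp_line h₂ hs₂ x hθ)

theorem abs_exp_neg_sub_add_le {a b m : ℝ} (ha : |a| ≤ m) (hb : |b| ≤ m) (hm : m ≤ 1) :
    |exp (-a) - exp (-b) + (a - b)| ≤ 2 * m * |a - b| := by
  have hd : ∀ t ∈ Set.Icc (-m) m, HasDerivWithinAt (fun t : ℝ => exp (-t) + t) (-exp (-t) + 1)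
      (Set.Icc (-m) m) t := by
    intro t _
    have := ((hasDerivAt_neg t).exp.add (hasDerivAt_id t)).hasDerivWithinAt (s := Set.Icc (-m) m)
    rw [mul_neg_one] at this
    exact this
  have hbd : ∀ t ∈ Set.Icc (-m) m, ‖-exp (-t) + 1‖ ≤ 2 * m := by
    intro t ht
    have ht' : |-t| ≤ m := by rw [abs_neg]; exact abs_le.2 ht
    have := Real.abs_exp_sub_one_le (ht'.trans hm)
    rw [Real.norm_eq_abs, neg_add_eq_sub, abs_sub_comm]
    linarith
  have := (convex_Icc (-m) m).norm_image_sub_le_of_norm_hasDerivWithin_le hd hbd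
    (abs_le.1 hb) (abs_le.1 ha)
  simp only [Real.norm_eq_abs] at this
  refine le_trans (le_of_eq ?_) this
  congr 1
  ring

/-- Surface measure on the sphere times Lebesgue measure on a symmetric interval. -/
noncomputable def segmentMeasure (n : ℕ) (R : ℝ) : Measure (sphere (0 : Euc n) 1 × ℝ) :=
  (sphereMeasure n).prod (volume.restrict (Set.Icc (-(2 * R)) (2 * R)))

instance (R : ℝ) : IsFiniteMeasure (segmentMeasure n R) :=
  inferInstanceAs (IsFiniteMeasure ((sphereMeasure n).prod _))

theorem integrable_Xray {R M : ℝ} (hR : 0 < R) (hf : Continuous f)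
    (hfR : Function.support f ⊆ ball 0 R) (hM : ∀ x, |f x| ≤ M) {x : Euc n} (hx : x ∈ ball 0 R) :
    Integrable (fun θ : sphere (0 : Euc n) 1 => Xray f x θ) (sphereMeasure n) :=
  .of_bound ((stronglyMeasurable_Xray hf).comp_measurable
    (measurable_prodMk_left (x := x))).aestronglyMeasurable (4 * R * M)
    (.of_forall fun θ => abs_Xray_le hR hfR hM hx (norm_eq_of_mem_sphere θ))

theorem exp_neg_Xray_le {R M : ℝ} (hR : 0 < R) (hfR : Function.support f ⊆ ball 0 R)
    (hM : ∀ x, |f x| ≤ M) {x : Euc n} (hx : x ∈ ball 0 R) (θ : sphere (0 : Euc n) 1) :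
    ‖exp (-Xray f x θ)‖ ≤ exp (4 * R * M) := by
  rw [Real.norm_of_nonneg (exp_pos _).le, exp_le_exp]
  linarith [(abs_le.1 (abs_Xray_le hR hfR hM hx (norm_eq_of_mem_sphere θ))).1]

theorem integrable_exp_neg_Xray {R M : ℝ} (hR : 0 < R) (hf : Continuous f)
    (hfR : Function.support f ⊆ ball 0 R) (hM : ∀ x, |f x| ≤ M) {x : Euc n} (hx : x ∈ ball 0 R) :
    Integrable (fun θ : sphere (0 : Euc n) 1 => exp (-Xray f x θ)) (sphereMeasure n) :=
  .of_bound (continuous_exp.comp_stronglyMeasurable ((stronglyMeasurable_Xray hf).comp_measurable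
    (measurable_prodMk_left (x := x))).neg).aestronglyMeasurable (exp (4 * R * M))
    (.of_forall (exp_neg_Xray_le hR hfR hM hx))

theorem memLp_singlePixel {R M : ℝ} (hR : 0 < R) (hf : Continuous f)
    (hfR : Function.support f ⊆ ball 0 R) (hM : ∀ x, |f x| ≤ M) {U : Set (Euc n)}
    (hU : MeasurableSet U) (hUR : U ⊆ ball 0 R) :
    MemLp (singlePixel f) 2 (volume.restrict U) := by
  have : IsFiniteMeasure (volume.restrict U) :=
    isFiniteMeasure_restrict.2 ((measure_mono hUR).trans_lt measure_ball_lt_top).ne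
  refine .of_bound (C := exp (4 * R * M) * (sphereMeasure n).real Set.univ) ?_ ?_
  · have : StronglyMeasurable fun q : Euc n × sphere (0 : Euc n) 1 => exp (-Xray f q.1 q.2) :=
      continuous_exp.comp_stronglyMeasurable (stronglyMeasurable_Xray hf).neg
    exact this.integral_prod_right.aestronglyMeasurable
  · filter_upwards [ae_restrict_mem hU] with x hx
    exact norm_integral_le_of_norm_le_const (.of_forall (exp_neg_Xray_le hR hfR hM (hUR hx)))

/-- Quadratic estimate for the remainder in the linearization of the single pixel transform. -/
theorem sq_singlePixel_sub_add_normalOp_le {R M : ℝ} (hR : 0 < R) (hRM : 4 * R * M ≤ 1)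
    (h₁ : Continuous f₁) (h₂ : Continuous f₂)
    (hs₁ : HasCompactSupport f₁) (hs₂ : HasCompactSupport f₂)
    (hf₁ : Function.support f₁ ⊆ ball 0 R) (hf₂ : Function.support f₂ ⊆ ball 0 R)
    (hM₁ : ∀ x, |f₁ x| ≤ M) (hM₂ : ∀ x, |f₂ x| ≤ M) {x : Euc n} (hx : x ∈ ball 0 R) :
    (singlePixel f₁ x - singlePixel f₂ x + normalOp (fun y => f₁ y - f₂ y) x) ^ 2 ≤
      (8 * R * M) ^ 2 * ((segmentMeasure n R).real Set.univ *
        ∫ b, (f₁ (x + b.2 • (b.1 : Euc n)) - f₂ (x + b.2 • (b.1 : Euc n))) ^ 2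
          ∂segmentMeasure n R) := by
  set h : Euc n → ℝ := fun y => f₁ y - f₂ y with hh
  have hM0 : 0 ≤ M := (abs_nonneg _).trans (hM₁ 0)
  have hhc : Continuous h := h₁.sub h₂
  have hhR : Function.support h ⊆ ball 0 R := by
    refine (Function.support_sub f₁ f₂).trans (Set.union_subset hf₁ hf₂)
  have hhM : ∀ y, |h y| ≤ 2 * M := fun y => by
    have := abs_sub (f₁ y) (f₂ y)
    linarith [hM₁ y, hM₂ y]
  have hbc : Continuous fun b : sphere (0 : Euc n) 1 × ℝ => h (x + b.2 • (b.1 : Euc n)) := by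
    fun_prop
  have hb : Integrable (fun b : sphere (0 : Euc n) 1 × ℝ => |h (x + b.2 • (b.1 : Euc n))|)
      (segmentMeasure n R) :=
    .of_bound hbc.abs.aestronglyMeasurable (2 * M) (.of_forall fun b => by
      rw [Real.norm_eq_abs, abs_abs]; exact hhM _)
  have hb2 : Integrable (fun b : sphere (0 : Euc n) 1 × ℝ => |h (x + b.2 • (b.1 : Euc n))| ^ 2)
      (segmentMeasure n R) :=
    .of_bound (hbc.abs.pow 2).aestronglyMeasurable ((2 * M) ^ 2) (.of_forall fun b => by
      rw [Real.norm_of_nonneg (by positivity)]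
      gcongr
      exact hhM _)
  have hX : ∀ θ : sphere (0 : Euc n) 1, Xray h x θ = Xray f₁ x θ - Xray f₂ x θ := fun θ =>
    Xray_sub h₁ h₂ hs₁ hs₂ x (norm_eq_of_mem_sphere θ)
  have hDeq : singlePixel f₁ x - singlePixel f₂ x + normalOp h x =
      ∫ θ : sphere (0 : Euc n) 1, (exp (-Xray f₁ x θ) - exp (-Xray f₂ x θ) +
        (Xray f₁ x θ - Xray f₂ x θ)) ∂sphereMeasure n := by
    have e₁ := integrable_exp_neg_Xray hR h₁ hf₁ hM₁ hx
    have e₂ := integrable_exp_neg_Xray hR h₂ hf₂ hM₂ hx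
    have i₁ := integrable_Xray hR h₁ hf₁ hM₁ hx
    have i₂ := integrable_Xray hR h₂ hf₂ hM₂ hx
    simp only [singlePixel, normalOp, hX]
    rw [← integral_sub e₁ e₂]
    exact (integral_add (e₁.sub e₂) (i₁.sub i₂)).symm
  have hDle : |singlePixel f₁ x - singlePixel f₂ x + normalOp h x| ≤
      8 * R * M * ∫ b, |h (x + b.2 • (b.1 : Euc n))| ∂segmentMeasure n R := by
    rw [hDeq, ← Real.norm_eq_abs, segmentMeasure, integral_prod _ hb, ← integral_const_mul]
    refine norm_integral_le_of_norm_le (hb.integral_prod_left.const_mul _)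
      (.of_forall fun θ => ?_)
    have hθ : ‖(θ : Euc n)‖ = 1 := norm_eq_of_mem_sphere θ
    refine (abs_exp_neg_sub_add_le (abs_Xray_le hR hf₁ hM₁ hx hθ) (abs_Xray_le hR hf₂ hM₂ hx hθ)
      hRM).trans ?_
    rw [← hX θ, Xray_eq_setIntegral hhR hx hθ, show 2 * (4 * R * M) = 8 * R * M by ring]
    gcongr
    exact abs_integral_le_integral_abs
  calc _ ≤ (8 * R * M * ∫ b, |h (x + b.2 • (b.1 : Euc n))| ∂segmentMeasure n R) ^ 2 :=
        sq_le_sq' (abs_le.1 hDle).1 (abs_le.1 hDle).2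
    _ ≤ _ := by
      rw [mul_pow]
      gcongr
      simpa only [sq_abs] using sq_integral_le hb hb2

end Remainder

theorem integral_le_integral_of_nonneg {α : Type*} [MeasurableSpace α] {μ : Measure α}
    {f g : α → ℝ} (hg : Integrable g μ) (hg0 : 0 ≤ᵐ[μ] g) (hfg : f ≤ᵐ[μ] g) :
    ∫ a, f a ∂μ ≤ ∫ a, g a ∂μ := by
  by_cases hf : Integrable f μ
  · exact integral_mono_ae hf hg hfg
  · rw [integral_undef hf]
    exact integral_nonneg_of_ae hg0

theorem integral_mul_normalOp_le {n : ℕ} {f₁ f₂ : Euc n → ℝ} {R M ε : ℝ} (hR : 0 < R)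
    (hRM : 4 * R * M ≤ 1) (hε : 0 < ε) (h₁ : Continuous f₁) (h₂ : Continuous f₂)
    (hs₁ : HasCompactSupport f₁) (hs₂ : HasCompactSupport f₂) {U : Set (Euc n)}
    (hU : MeasurableSet U) (hUR : U ⊆ ball 0 R)
    (hf₁ : Function.support f₁ ⊆ U) (hf₂ : Function.support f₂ ⊆ U)
    (hM₁ : ∀ x, |f₁ x| ≤ M) (hM₂ : ∀ x, |f₂ x| ≤ M) :
    ∫ x, (f₁ x - f₂ x) * normalOp (fun y => f₁ y - f₂ y) x ≤
      ε * (∫ x, (f₁ x - f₂ x) ^ 2) + (2 * ε)⁻¹ *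
        ((8 * R * M * (segmentMeasure n R).real Set.univ) ^ 2 * (∫ x, (f₁ x - f₂ x) ^ 2) +
          ∫ x in U, (singlePixel f₁ x - singlePixel f₂ x) ^ 2) := by
  set h : Euc n → ℝ := fun y => f₁ y - f₂ y
  set m := (segmentMeasure n R).real Set.univ
  set W : Euc n → ℝ := fun x => ∫ b, h (x + b.2 • (b.1 : Euc n)) ^ 2 ∂segmentMeasure n R
  have hhc : Continuous h := h₁.sub h₂
  have hhs : HasCompactSupport h := hs₁.sub hs₂
  have hh2 : Integrable fun x => h x ^ 2 := integrable_sq hhc hhs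
  have hφ : Measurable fun b : sphere (0 : Euc n) 1 × ℝ => b.2 • (b.1 : Euc n) := by fun_prop
  have hW : Integrable W :=
    (integrable_prod_comp_add (ν := segmentMeasure n R) (hhc.pow 2) hh2 hφ).integral_prod_left
  have hWint : ∫ x, W x = m * ∫ x, h x ^ 2 :=
    integral_integral_comp_add (ν := segmentMeasure n R) (hhc.pow 2) hh2 hφ
  have hu2 : IntegrableOn (fun x => (singlePixel f₁ x - singlePixel f₂ x) ^ 2) U :=
    ((memLp_singlePixel hR h₁ (hf₁.trans hUR) hM₁ hU hUR).sub
      (memLp_singlePixel hR h₂ (hf₂.trans hUR) hM₂ hU hUR)).integrable_sq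
  have hm : 0 ≤ m := measureReal_nonneg
  have hW0 : ∀ x, 0 ≤ W x := fun x => integral_nonneg fun b => sq_nonneg _
  have hi₁ : Integrable (fun x => ε * h x ^ 2) (volume.restrict U) :=
    (hh2.const_mul ε).integrableOn
  have hi₂ : Integrable (fun x => (8 * R * M) ^ 2 * (m * W x)) (volume.restrict U) :=
    ((hW.const_mul m).const_mul _).integrableOn
  have hi₃ : Integrable (fun x => (2 * ε)⁻¹ * ((8 * R * M) ^ 2 * (m * W x) +
      (singlePixel f₁ x - singlePixel f₂ x) ^ 2)) (volume.restrict U) :=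
    (hi₂.add hu2).const_mul _
  have hres : ∫ x, h x * normalOp h x = ∫ x in U, h x * normalOp h x := by
    refine (setIntegral_eq_integral_of_forall_compl_eq_zero fun x hx => ?_).symm
    have e₁ : f₁ x = 0 := Function.notMem_support.1 fun hx' => hx (hf₁ hx')
    have e₂ : f₂ x = 0 := Function.notMem_support.1 fun hx' => hx (hf₂ hx')
    simp [h, e₁, e₂]
  have hbound : ∫ x in U, h x * normalOp h x ≤ ∫ x in U, (ε * h x ^ 2 +
      (2 * ε)⁻¹ * ((8 * R * M) ^ 2 * (m * W x) +
        (singlePixel f₁ x - singlePixel f₂ x) ^ 2)) := by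
    refine integral_le_integral_of_nonneg (hi₁.add hi₃) (.of_forall fun x => ?_) ?_
    · have := hW0 x
      simp only [Pi.zero_apply]
      positivity
    · filter_upwards [ae_restrict_mem hU] with x hx
      have hD := sq_singlePixel_sub_add_normalOp_le hR hRM h₁ h₂ hs₁ hs₂ (hf₁.trans hUR)
        (hf₂.trans hUR) hM₁ hM₂ (hUR hx)
      set u := singlePixel f₁ x - singlePixel f₂ x
      set N := normalOp h x
      have hyoung : ∀ a b : ℝ, a * b ≤ ε / 2 * a ^ 2 + (2 * ε)⁻¹ * b ^ 2 := by
        intro a b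
        have : 0 ≤ (2 * ε)⁻¹ * (ε * a - b) ^ 2 := by positivity
        have e : (2 * ε)⁻¹ * (ε * a - b) ^ 2 = ε / 2 * a ^ 2 + (2 * ε)⁻¹ * b ^ 2 - a * b := by
          field_simp
          ring
        linarith
      have y₁ := hyoung (h x) (u + N)
      have y₂ := hyoung (h x) (-u)
      have y₃ := mul_le_mul_of_nonneg_left hD (by positivity : 0 ≤ (2 * ε)⁻¹)
      calc h x * N = h x * (u + N) + h x * -u := by ring
        _ ≤ _ := by
          rw [neg_sq] at y₂
          rw [mul_add]
          linarith
  have hle₁ : ∫ x in U, h x ^ 2 ≤ ∫ x, h x ^ 2 :=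
    setIntegral_le_integral hh2 (.of_forall fun x => sq_nonneg _)
  have hle₂ : ∫ x in U, W x ≤ m * ∫ x, h x ^ 2 :=
    (setIntegral_le_integral hW (.of_forall hW0)).trans_eq hWint
  rw [hres]
  refine hbound.trans ?_
  rw [integral_add hi₁ hi₃, integral_const_mul, integral_const_mul, integral_add hi₂ hu2,
    integral_const_mul, integral_const_mul]
  have hrem : (8 * R * M) ^ 2 * (m * ∫ x in U, W x) ≤ (8 * R * M * m) ^ 2 * ∫ x, h x ^ 2 := by
    calc (8 * R * M) ^ 2 * (m * ∫ x in U, W x)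
        ≤ (8 * R * M) ^ 2 * (m * (m * ∫ x, h x ^ 2)) := by gcongr
      _ = _ := by ring
  exact add_le_add (mul_le_mul_of_nonneg_left hle₁ hε.le)
    (mul_le_mul_of_nonneg_left (add_le_add hrem le_rfl) (by positivity))

theorem abs_le_of_iSup_add_iSup_le {n : ℕ} {f : Euc n → ℝ} {M : ℝ} (hf : Continuous f)
    (hs : HasCompactSupport f)
    (hM : (⨆ x : Euc n, |f x|) + (⨆ x : Euc n, ‖fderiv ℝ f x‖) ≤ M) (x : Euc n) : |f x| ≤ M := by
  obtain ⟨B, hB⟩ := hs.exists_bound_of_continuous hf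
  have h1 : |f x| ≤ ⨆ x : Euc n, |f x| :=
    le_ciSup (f := fun x => |f x|) ⟨B, Set.forall_mem_range.2 hB⟩ x
  have h2 : 0 ≤ ⨆ x : Euc n, ‖fderiv ℝ f x‖ := Real.iSup_nonneg fun x => norm_nonneg _
  linarith

/-- For `n ≥ 3`, open bounded `Ω, Ω₁` with `closure Ω ⊂ Ω₁`, and a fixed `c > 0`,
there exist `M₀ > 0` and `C̃ > 0` such that for every `0 < M ≤ M₀` and all `C¹` functions
`f₁, f₂` supported in `closure Ω` with `‖f_j‖_{C¹} ≤ M` and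
`‖f₁ − f₂‖_{L²} ≥ c‖∇(f₁ − f₂)‖_{L²}`, one has
`C̃ ‖f₁ − f₂‖_{L²(ℝⁿ)} ≤ ‖Kf₁ − Kf₂‖_{H¹(Ω₁)}`. -/
theorem singlePixel_lower_stability (n : ℕ) (hn : 3 ≤ n) (Ω Ω₁ : Set (Euc n))
    (hΩo : IsOpen Ω) (hΩb : Bornology.IsBounded Ω)
    (hΩ₁o : IsOpen Ω₁) (hΩ₁b : Bornology.IsBounded Ω₁) (hΩΩ₁ : closure Ω ⊆ Ω₁)
    (c : ℝ) (hc : 0 < c) :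
    ∃ M₀ > 0, ∃ C' > 0, ∀ M : ℝ, 0 < M → M ≤ M₀ → ∀ f₁ f₂ : Euc n → ℝ,
      ContDiff ℝ 1 f₁ → ContDiff ℝ 1 f₂ →
      Function.support f₁ ⊆ closure Ω → Function.support f₂ ⊆ closure Ω →
      (⨆ x : Euc n, |f₁ x|) + (⨆ x : Euc n, ‖fderiv ℝ f₁ x‖) ≤ M →
      (⨆ x : Euc n, |f₂ x|) + (⨆ x : Euc n, ‖fderiv ℝ f₂ x‖) ≤ M →
      c * (∫ x : Euc n, ‖fderiv ℝ (fun y => f₁ y - f₂ y) x‖ ^ 2) ^ ((1 : ℝ) / 2) ≤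
        L2norm (fun y => f₁ y - f₂ y) →
      C' * L2norm (fun y => f₁ y - f₂ y) ≤
        H1norm Ω₁ (fun x => singlePixel f₁ x - singlePixel f₂ x) := by
  obtain ⟨R, hR, hΩ₁R⟩ := hΩ₁b.subset_ball_lt 0 0
  obtain ⟨κ, hκ0, hκ⟩ := integral_coneKernel hn
  set m := (segmentMeasure n R).real Set.univ
  set a := c / 4 * volume.real (ball (0 : Euc n) 1) ^ 2 with ha_def
  have ha : 0 < a := by
    have : 0 < volume.real (ball (0 : Euc n) 1) :=
      ENNReal.toReal_pos (measure_ball_pos _ _ one_pos).ne' measure_ball_lt_top.ne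
    positivity
  set ε := a / (4 * (κ + 1)) with hε_def
  have hε : 0 < ε := by positivity
  set b := (κ + 1) * (2 * ε)⁻¹ with hb_def
  have hb : 0 < b := by positivity
  set β := (8 * R * m) ^ 2 with hβ_def
  have hβ : 0 ≤ β := by positivity
  refine ⟨min (1 / (4 * R)) √(a / (4 * b * (β + 1))), by positivity, √(a / (2 * b)), by positivity,
    fun M hM hMM₀ f₁ f₂ h₁ h₂ hf₁ hf₂ hM₁ hM₂ hgrad => ?_⟩
  have hcpt : IsCompact (closure Ω) := hΩb.isCompact_closure
  have hs₁ : HasCompactSupport f₁ := .of_support_subset_isCompact hcpt hf₁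
  have hs₂ : HasCompactSupport f₂ := .of_support_subset_isCompact hcpt hf₂
  have hRM : 4 * R * M ≤ 1 := by
    have := hMM₀.trans (min_le_left _ _)
    rw [le_div_iff₀ (by positivity)] at this
    linarith
  have hM2 : b * (β * M ^ 2) ≤ a / 4 := by
    have h1 : M ^ 2 ≤ a / (4 * b * (β + 1)) :=
      (Real.le_sqrt hM.le (by positivity)).1 (hMM₀.trans (min_le_right _ _))
    rw [le_div_iff₀ (by positivity)] at h1
    nlinarith [mul_pos hb (pow_pos hM 2)]
  set H := ∫ x, (f₁ x - f₂ x) ^ 2 with hH_def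
  set D := ∫ x : Euc n, ‖fderiv ℝ (fun y => f₁ y - f₂ y) x‖ ^ 2 with hD_def
  set S := ∫ x in Ω₁, (singlePixel f₁ x - singlePixel f₂ x) ^ 2 with hS_def
  have hH : 0 ≤ H := integral_nonneg fun x => sq_nonneg _
  have hD : 0 ≤ D := integral_nonneg fun x => sq_nonneg _
  have hS : 0 ≤ S := integral_nonneg fun x => sq_nonneg _
  have hgrad' : c ^ 2 * D ≤ H := by
    simp only [L2norm, ← Real.sqrt_eq_rpow] at hgrad
    have := pow_le_pow_left₀ (by positivity) hgrad 2
    rwa [mul_pow, Real.sq_sqrt hD, Real.sq_sqrt hH] at this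
  have hlow := integral_sq_le_integral_mul_normalOp hn (h₁.sub h₂) (hs₁.sub hs₂) hκ hc hgrad'
  have hupp := integral_mul_normalOp_le hR hRM hε h₁.continuous h₂.continuous hs₁ hs₂
    hΩ₁o.measurableSet hΩ₁R (hf₁.trans hΩΩ₁) (hf₂.trans hΩΩ₁)
    (abs_le_of_iSup_add_iSup_le h₁.continuous hs₁ hM₁)
    (abs_le_of_iSup_add_iSup_le h₂.continuous hs₂ hM₂)
  have hmain : a / (2 * b) * H ≤ S := by
    have e₁ : (κ + 1) * ε = a / 4 := by
      rw [hε_def]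
      field_simp
    have key : a * H ≤ (κ + 1) * (ε * H + (2 * ε)⁻¹ * ((8 * R * M * m) ^ 2 * H + S)) :=
      calc a * H ≤ κ * (ε * H + (2 * ε)⁻¹ * ((8 * R * M * m) ^ 2 * H + S)) :=
            hlow.trans (mul_le_mul_of_nonneg_left hupp hκ0)
        _ ≤ _ := by
          gcongr
          linarith
    have e₂ : (κ + 1) * (ε * H + (2 * ε)⁻¹ * ((8 * R * M * m) ^ 2 * H + S)) =
        (κ + 1) * ε * H + b * (β * M ^ 2) * H + b * S := by
      rw [hb_def, hβ_def]
      ring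
    rw [e₂, e₁] at key
    have := mul_le_mul_of_nonneg_right hM2 hH
    rw [div_mul_eq_mul_div, div_le_iff₀ (by positivity)]
    linarith
  calc √(a / (2 * b)) * L2norm (fun y => f₁ y - f₂ y) = √(a / (2 * b) * H) := by
        rw [L2norm, ← Real.sqrt_eq_rpow, Real.sqrt_mul (by positivity)]
    _ ≤ √S := Real.sqrt_le_sqrt hmain
    _ ≤ H1norm Ω₁ (fun x => singlePixel f₁ x - singlePixel f₂ x) := by
      rw [H1norm, ← Real.sqrt_eq_rpow, ← Real.sqrt_eq_rpow]
      exact le_add_of_nonneg_right (Real.sqrt_nonneg _)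
end

section
/- Let n ≥ 2 and let f, h : ℝⁿ → ℝ be continuous and compactly supported. Then the single pixel X-ray transform is a monotone operator in the sense that ∫_{ℝⁿ} ( Kf(x) − Kh(x) ) ( f(x) − h(x) ) dx ≤ 0. -/
open MeasureTheory Metric Real

/-- A compactly supported function vanishes outside some closed ball. -/
lemma HasCompactSupport.exists_norm_le {E : Type*} [SeminormedAddCommGroup E] {f : E → ℝ}
    (hf : HasCompactSupport f) : ∃ M : ℝ, ∀ x, f x ≠ 0 → ‖x‖ ≤ M := by
  obtain ⟨M, hM⟩ := hf.isCompact.isBounded.exists_norm_le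
  exact ⟨M, fun x hx ↦ hM x (subset_tsupport f hx)⟩

/-- The X-ray transform is constant along the direction of integration. -/
lemma Xray_add_smul {n : ℕ} (f : Euc n → ℝ) (x θ : Euc n) (t : ℝ) :
    Xray f (x + t • θ) θ = Xray f x θ := by
  have := integral_add_left_eq_self (μ := volume) (fun s : ℝ ↦ f (x + s • θ)) t
  simpa only [Xray, add_smul, add_assoc] using this

/-- The X-ray transform of a continuous compactly supported function is jointly continuous. -/
lemma continuous_Xray {n : ℕ} {f : Euc n → ℝ} (hf : Continuous f) (hfc : HasCompactSupport f) :
    Continuous fun p : Euc n × sphere (0 : Euc n) 1 ↦ Xray f p.1 p.2 := by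
  obtain ⟨M, hM⟩ := hfc.exists_norm_le
  refine continuous_iff_continuousAt.2 fun p ↦ ?_
  have hopen : IsOpen {q : Euc n × sphere (0 : Euc n) 1 | ‖q.1‖ < ‖p.1‖ + 1} :=
    isOpen_lt (by fun_prop) (by fun_prop)
  refine ContinuousOn.continuousAt (s := {q | ‖q.1‖ < ‖p.1‖ + 1}) ?_
    (hopen.mem_nhds (by simp))
  refine continuousOn_integral_of_compact_support
    (f := fun (q : Euc n × sphere (0 : Euc n) 1) (s : ℝ) ↦ f (q.1 + s • (q.2 : Euc n)))
    (isCompact_closedBall (0 : ℝ) (M + (‖p.1‖ + 1))) (Continuous.continuousOn ?_) ?_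
  · simp only [Function.uncurry_def]
    fun_prop
  · intro q s hq hs
    by_contra hne
    refine hs (mem_closedBall_zero_iff.2 ?_)
    have hθ : ‖(q.2 : Euc n)‖ = 1 := by simp
    have hs' : ‖s • (q.2 : Euc n)‖ = ‖s‖ := by rw [norm_smul, hθ, mul_one]
    have hsub := norm_sub_le (q.1 + s • (q.2 : Euc n)) q.1
    rw [add_sub_cancel_left, hs'] at hsub
    have := hM _ hne
    have : ‖q.1‖ < ‖p.1‖ + 1 := hq
    linarith

/-- The integral of `G * g`, where `G` is invariant under translations along `θ`, in terms of the
X-ray transform of `g` in the direction `θ`: here `φ` is a weight of integral one. -/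
lemma integral_mul_eq_integral_mul_Xray {n : ℕ} {G g : Euc n → ℝ} {φ : ℝ → ℝ} {θ : Euc n}
    (hθ : ‖θ‖ = 1) (hG : Continuous G) (hGθ : ∀ x (t : ℝ), G (x + t • θ) = G x)
    (hg : Continuous g) (hgc : HasCompactSupport g)
    (hφ : Continuous φ) (hφc : HasCompactSupport φ) (hφ1 : ∫ s, φ s = 1) :
    ∫ x, G x * g x = ∫ x, φ (inner ℝ x θ) * (G x * Xray g x θ) := by
  obtain ⟨M, hM⟩ := hgc.exists_norm_le
  obtain ⟨r, hr⟩ := hφc.exists_norm_le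
  have hinner (x : Euc n) : ‖(inner ℝ x θ : ℝ)‖ ≤ ‖x‖ := by
    simpa [hθ] using norm_inner_le_norm (𝕜 := ℝ) x θ
  have hinner_add (x : Euc n) (s : ℝ) : (inner ℝ (x + s • θ) θ : ℝ) = inner ℝ x θ + s := by
    simp [inner_add_left, inner_smul_left, hθ]
  calc ∫ x, G x * g x
      = ∫ x, ∫ s : ℝ, G x * g x * φ (inner ℝ x θ - s) := by
        congr with x
        rw [integral_const_mul, integral_sub_left_eq_self φ volume, hφ1, mul_one]
    _ = ∫ s : ℝ, ∫ x, G x * g x * φ (inner ℝ x θ - s) := by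
        refine integral_integral_swap_of_hasCompactSupport
          (by simp only [Function.uncurry_def]; fun_prop) ?_
        refine HasCompactSupport.intro ((isCompact_closedBall (0 : Euc n) M).prod
          (isCompact_closedBall (0 : ℝ) (M + r))) fun p hp ↦ ?_
        by_contra hne
        simp only [Function.uncurry_def, mul_ne_zero_iff] at hne
        have h1 := hM _ hne.1.2
        have h2 := hr _ hne.2
        have h3 := norm_sub_le (inner ℝ p.1 θ : ℝ) (inner ℝ p.1 θ - p.2)
        rw [sub_sub_cancel] at h3
        have h4 := hinner p.1
        exact hp ⟨mem_closedBall_zero_iff.2 h1, mem_closedBall_zero_iff.2 (by linarith)⟩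
    _ = ∫ s : ℝ, ∫ x, φ (inner ℝ x θ) * (G x * g (x + s • θ)) := by
        congr with s
        rw [← integral_add_right_eq_self _ (s • θ)]
        congr with x
        rw [hGθ, hinner_add, add_sub_cancel_right, mul_comm]
    _ = ∫ x, ∫ s : ℝ, φ (inner ℝ x θ) * (G x * g (x + s • θ)) := by
        refine integral_integral_swap_of_hasCompactSupport
          (by simp only [Function.uncurry_def]; fun_prop) ?_
        refine HasCompactSupport.intro ((isCompact_closedBall (0 : ℝ) (M + r)).prod
          (isCompact_closedBall (0 : Euc n) (M + (M + r)))) fun p hp ↦ ?_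
        by_contra hne
        simp only [Function.uncurry_def, mul_ne_zero_iff] at hne
        have h1 := hM _ hne.2.2
        have h2 := hr _ hne.1
        have h3 := norm_sub_le (inner ℝ (p.2 + p.1 • θ) θ : ℝ) (inner ℝ p.2 θ)
        have h4 := hinner (p.2 + p.1 • θ)
        have h5 : (inner ℝ (p.2 + p.1 • θ) θ : ℝ) - inner ℝ p.2 θ = p.1 := by
          rw [hinner_add, add_sub_cancel_left]
        rw [h5] at h3
        have h6 := norm_sub_le (p.2 + p.1 • θ) (p.1 • θ)
        rw [add_sub_cancel_right, norm_smul, hθ, mul_one] at h6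
        exact hp ⟨mem_closedBall_zero_iff.2 (by linarith),
          mem_closedBall_zero_iff.2 (by linarith)⟩
    _ = ∫ x, φ (inner ℝ x θ) * (G x * Xray g x θ) := by
        simp only [integral_const_mul, Xray]

/-- For a function invariant along `θ` which has the opposite sign of the X-ray transform of `g`
in the direction `θ`, the integral against `g` is nonpositive. -/
lemma integral_mul_nonpos_of_mul_Xray_nonpos {n : ℕ} {G g : Euc n → ℝ} {θ : Euc n}
    (hθ : ‖θ‖ = 1) (hG : Continuous G) (hGθ : ∀ x (t : ℝ), G (x + t • θ) = G x)
    (hg : Continuous g) (hgc : HasCompactSupport g) (hGg : ∀ x, G x * Xray g x θ ≤ 0) :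
    ∫ x, G x * g x ≤ 0 := by
  let b : ContDiffBump (0 : ℝ) := default
  rw [integral_mul_eq_integral_mul_Xray (φ := b.normed volume) hθ hG hGθ hg hgc
    b.continuous_normed b.hasCompactSupport_normed b.integral_normed]
  exact integral_nonpos fun x ↦ mul_nonpos_of_nonneg_of_nonpos (b.nonneg_normed _) (hGg x)

/-- The X-ray transform commutes with subtraction of continuous compactly supported functions. -/
lemma Xray_sub_s18 {n : ℕ} {f h : Euc n → ℝ} (hf : Continuous f) (hfc : HasCompactSupport f)
    (hh : Continuous h) (hhc : HasCompactSupport h) (x : Euc n) {θ : Euc n} (hθ : ‖θ‖ = 1) :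
    Xray (f - h) x θ = Xray f x θ - Xray h x θ := by
  have hint {u : Euc n → ℝ} (hu : Continuous u) (huc : HasCompactSupport u) :
      Integrable fun s : ℝ ↦ u (x + s • θ) := by
    obtain ⟨M, hM⟩ := huc.exists_norm_le
    refine Continuous.integrable_of_hasCompactSupport (by fun_prop)
      (HasCompactSupport.intro (isCompact_closedBall (0 : ℝ) (M + ‖x‖)) fun s hs ↦ ?_)
    by_contra hne
    have h1 := hM _ hne
    have h2 := norm_sub_le (x + s • θ) x
    rw [add_sub_cancel_left, norm_smul, hθ, mul_one] at h2
    exact hs (mem_closedBall_zero_iff.2 (by linarith))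
  exact integral_sub (hint hf hfc) (hint hh hhc)

instance (n : ℕ) : IsFiniteMeasure (sphereMeasure n) :=
  inferInstanceAs (IsFiniteMeasure (volume : Measure (Euc n)).toSphere)

/-- For `n ≥ 2` and `f, h` continuous with compact support, the single pixel X-ray
transform is monotone: `∫ (Kf(x) − Kh(x))(f(x) − h(x)) dx ≤ 0`. -/
theorem singlePixel_monotone (n : ℕ) (hn : 2 ≤ n) (f h : Euc n → ℝ)
    (hf : Continuous f) (hfc : HasCompactSupport f)
    (hh : Continuous h) (hhc : HasCompactSupport h) :
    ∫ x : Euc n, (singlePixel f x - singlePixel h x) * (f x - h x) ≤ 0 := by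
  have hXf := continuous_Xray hf hfc
  have hXh := continuous_Xray hh hhc
  have hgc : HasCompactSupport (f - h) := hfc.sub hhc
  let D (x : Euc n) (θ : sphere (0 : Euc n) 1) : ℝ := exp (-Xray f x θ) - exp (-Xray h x θ)
  have hD : Continuous (Function.uncurry D) := by
    simp only [Function.uncurry_def, D]
    fun_prop
  have hint {u : Euc n → ℝ} (hu : Continuous fun p : Euc n × sphere (0 : Euc n) 1 ↦ Xray u p.1 p.2)
      (x : Euc n) : Integrable (fun θ : sphere (0 : Euc n) 1 ↦ exp (-Xray u x θ))
        (sphereMeasure n) := by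
    have hux : Continuous fun θ : sphere (0 : Euc n) 1 ↦ Xray u x θ :=
      hu.comp (Continuous.prodMk_right x)
    exact (continuous_exp.comp hux.neg).integrable_of_hasCompactSupport
      (HasCompactSupport.of_compactSpace _)
  calc ∫ x : Euc n, (singlePixel f x - singlePixel h x) * (f x - h x)
      = ∫ x : Euc n, ∫ θ, D x θ * (f - h) x ∂(sphereMeasure n) := by
        congr with x
        rw [integral_mul_const, integral_sub (hint hXf x) (hint hXh x)]
        rfl
    _ = ∫ θ, (∫ x : Euc n, D x θ * (f - h) x) ∂(sphereMeasure n) := by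
        refine integral_integral_swap_of_hasCompactSupport ?_ ?_
        · exact hD.mul ((hf.sub hh).comp continuous_fst)
        · refine HasCompactSupport.intro (hgc.isCompact.prod isCompact_univ) fun p hp ↦ ?_
          have hp1 : (f - h) p.1 = 0 := by
            by_contra hne
            exact hp ⟨subset_tsupport _ hne, Set.mem_univ _⟩
          simp only [Function.uncurry_def, hp1, mul_zero]
    _ ≤ 0 := by
        refine integral_nonpos fun θ ↦ ?_
        have hθ : ‖(θ : Euc n)‖ = 1 := by simp
        refine integral_mul_nonpos_of_mul_Xray_nonpos hθ
          (hD.comp (Continuous.prodMk_left θ)) (fun x t ↦ ?_) (hf.sub hh) hgc fun x ↦ ?_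
        · simp only [D, Xray_add_smul]
        · rw [Xray_sub_s18 hf hfc hh hhc x hθ]
          rcases le_total (Xray f x θ) (Xray h x θ) with hle | hle
          · exact mul_nonpos_of_nonneg_of_nonpos
              (sub_nonneg.2 (exp_le_exp.2 (neg_le_neg hle))) (sub_nonpos.2 hle)
          · exact mul_nonpos_of_nonpos_of_nonneg
              (sub_nonpos.2 (exp_le_exp.2 (neg_le_neg hle))) (sub_nonneg.2 hle)
end
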